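/- arXiv:1606.00968 — 8 statements merged into one kernel-verified Lean document; each statement's English description precedes it below -/
import Mathlib

section
/- Let φ : ℝ → ℝ be a differentiable, non-negative function whose derivative is H-Lipschitz (i.e. |φ'(a) - φ'(a')| ≤ H·|a - a'| for all a, a' ∈ ℝ), where H > 0. Then for every a ∈ ℝ, |φ'(a)| ≤ √(4·H·φ(a)). -/
/-!
If `‖f' y - f' x‖ ≤ C * ‖y - x‖` for all `y`, then along every line `t ↦ x + t • v` the function `f`
lies below the quadratic `t ↦ f x + t * f' x v + (C / 2) * ‖v‖ ^ 2 * t ^ 2`. When `f` is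
non-negative this quadratic has non-positive discriminant, which bounds `f' x v`.
-/

theorem norm_fderiv_sub_fderiv {𝕜 F : Type*} [NontriviallyNormedField 𝕜] [NormedAddCommGroup F]
    [NormedSpace 𝕜 F] (f : 𝕜 → F) (x y : 𝕜) :
    ‖fderiv 𝕜 f x - fderiv 𝕜 f y‖ = ‖deriv f x - deriv f y‖ := by
  rw [← ContinuousLinearMap.norm_toSpanSingleton (𝕜 := 𝕜) (deriv f x - deriv f y)]
  congr 1
  ext
  simp

section NormedSpace

variable {E F : Type*} [NormedAddCommGroup E] [NormedSpace ℝ E]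
  [NormedAddCommGroup F] [NormedSpace ℝ F]

open Set in
theorem norm_image_sub_sub_le_of_norm_deriv_right_sub_le {g g' : ℝ → F} {v : F} {C a b : ℝ}
    (hab : a ≤ b) (hg : ContinuousOn g (Icc a b))
    (hg' : ∀ t ∈ Ico a b, HasDerivWithinAt g (g' t) (Ici t) t)
    (bound : ∀ t ∈ Ico a b, ‖g' t - v‖ ≤ C * (t - a)) :
    ‖g b - g a - (b - a) • v‖ ≤ C / 2 * (b - a) ^ 2 := by
  have hasDerivWithinAt_remainder : ∀ t ∈ Ico a b,
      HasDerivWithinAt (fun t ↦ g t - g a - (t - a) • v) (g' t - v) (Ici t) t := fun t ht ↦ by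
    simpa using ((hg' t ht).sub_const (g a)).fun_sub
      (((hasDerivWithinAt_id t _).sub_const a).smul_const v)
  have hasDerivAt_bound (t : ℝ) : HasDerivAt (fun t ↦ C / 2 * (t - a) ^ 2) (C * (t - a)) t :=
    (((hasDerivAt_pow 2 (t - a)).comp_sub_const t a).const_mul (C / 2)).congr_deriv (by ring)
  exact image_norm_le_of_norm_deriv_right_le_deriv_boundary (by fun_prop)
    hasDerivWithinAt_remainder (by simp) hasDerivAt_bound bound (right_mem_Icc.2 hab)

open AffineMap Set in
theorem norm_image_sub_sub_le_of_starConvex {f : E → F} {f' : E → E →L[ℝ] F} {s : Set E} {C : ℝ}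
    {x y : E} (hs : StarConvex ℝ x s) (hf : ∀ z ∈ s, HasFDerivWithinAt f (f' z) s z)
    (hf' : ∀ z ∈ s, ‖f' z - f' x‖ ≤ C * ‖z - x‖) (hy : y ∈ s) :
    ‖f y - f x - f' x (y - x)‖ ≤ C / 2 * ‖y - x‖ ^ 2 := by
  have line_mem : MapsTo (lineMap x y : ℝ → E) (Icc 0 1) s := fun t ht ↦
    hs.segment_subset hy (segment_eq_image_lineMap ℝ x y ▸ mem_image_of_mem _ ht)
  have hasDerivWithinAt_line : ∀ t ∈ Icc (0 : ℝ) 1,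
      HasDerivWithinAt (f ∘ lineMap x y) (f' (lineMap x y t) (y - x)) (Icc 0 1) t := fun t ht ↦
    (hf _ (line_mem ht)).comp_hasDerivWithinAt t hasDerivWithinAt_lineMap line_mem
  have norm_deriv_sub_le : ∀ t ∈ Ico (0 : ℝ) 1,
      ‖f' (lineMap x y t) (y - x) - f' x (y - x)‖ ≤ C * ‖y - x‖ ^ 2 * (t - 0) := fun t ht ↦
    calc ‖(f' (lineMap x y t) - f' x) (y - x)‖
        ≤ ‖f' (lineMap x y t) - f' x‖ * ‖y - x‖ := ContinuousLinearMap.le_opNorm _ _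
      _ ≤ C * ‖lineMap x y t - x‖ * ‖y - x‖ := by
        gcongr
        exact hf' _ (line_mem (Ico_subset_Icc_self ht))
      _ = C * ‖y - x‖ ^ 2 * (t - 0) := by
        rw [← dist_eq_norm, dist_lineMap_left, Real.norm_of_nonneg ht.1, dist_comm, dist_eq_norm]
        ring
  have remainder_le := norm_image_sub_sub_le_of_norm_deriv_right_sub_le zero_le_one
    (fun t ht ↦ (hasDerivWithinAt_line t ht).continuousWithinAt)
    (fun t ht ↦ (hasDerivWithinAt_line t (Ico_subset_Icc_self ht)).mono_of_mem_nhdsWithin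
      (Icc_mem_nhdsGE_of_mem ht))
    norm_deriv_sub_le
  simpa [mul_div_right_comm] using remainder_le

theorem sq_fderiv_apply_le_of_nonneg {f : E → ℝ} {f' : E → E →L[ℝ] ℝ} {C : ℝ} {x : E}
    (hf : ∀ y, HasFDerivAt f (f' y) y) (hf_nonneg : ∀ y, 0 ≤ f y)
    (hf' : ∀ y, ‖f' y - f' x‖ ≤ C * ‖y - x‖) (v : E) :
    f' x v ^ 2 ≤ 2 * C * f x * ‖v‖ ^ 2 := by
  have quadratic_nonneg (t : ℝ) :
      0 ≤ C / 2 * ‖v‖ ^ 2 * (t * t) + f' x v * t + f x := by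
    have descent := norm_image_sub_sub_le_of_starConvex (starConvex_univ x)
      (fun y _ ↦ (hf y).hasFDerivWithinAt) (fun y _ ↦ hf' y) (Set.mem_univ (x + t • v))
    rw [add_sub_cancel_left, map_smul, smul_eq_mul, norm_smul, mul_pow, Real.norm_eq_abs t,
      sq_abs] at descent
    linarith [hf_nonneg (x + t • v), le_of_abs_le descent]
  have discrim_nonpos := discrim_le_zero quadratic_nonneg
  rw [discrim] at discrim_nonpos
  linarith

theorem self_bounding_property_general {f : E → ℝ} {f' : E → E →L[ℝ] ℝ} {C : ℝ} {x : E}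
    (hf : ∀ y, HasFDerivAt f (f' y) y) (hf_nonneg : ∀ y, 0 ≤ f y)
    (hf' : ∀ y, ‖f' y - f' x‖ ≤ C * ‖y - x‖) :
    ‖f' x‖ ≤ √(2 * C * f x) := by
  refine ContinuousLinearMap.opNorm_le_bound _ (Real.sqrt_nonneg _) fun v ↦ ?_
  calc ‖f' x v‖ ≤ √(2 * C * f x * ‖v‖ ^ 2) :=
        Real.abs_le_sqrt (sq_fderiv_apply_le_of_nonneg hf hf_nonneg hf' v)
    _ = √(2 * C * f x) * ‖v‖ := by
        rw [Real.sqrt_mul' _ (sq_nonneg _), Real.sqrt_sq (norm_nonneg v)]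

end NormedSpace

/-- Self-bounding property of Lipschitz-smooth functions (Lemma 4 of the paper):
if `φ : ℝ → ℝ` is differentiable, non-negative, and its derivative is `H`-Lipschitz
(`H > 0`), then `|φ'(a)| ≤ √(4·H·φ(a))` for every `a`. -/
theorem self_bounding_property (φ : ℝ → ℝ) (H : ℝ) (hH : 0 < H)
    (hdiff : Differentiable ℝ φ)
    (hnonneg : ∀ a : ℝ, 0 ≤ φ a)
    (hsmooth : ∀ a a' : ℝ, |deriv φ a - deriv φ a'| ≤ H * |a - a'|) :
    ∀ a : ℝ, |deriv φ a| ≤ Real.sqrt (4 * H * φ a) := by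
  intro a
  have fderiv_lipschitz_at (b : ℝ) : ‖fderiv ℝ φ b - fderiv ℝ φ a‖ ≤ H * ‖b - a‖ :=
    (norm_fderiv_sub_fderiv φ b a).trans_le (hsmooth b a)
  calc |deriv φ a| = ‖fderiv ℝ φ a‖ := norm_deriv_eq_norm_fderiv (f := φ)
    _ ≤ √(2 * H * φ a) :=
      self_bounding_property_general (fun b ↦ (hdiff b).hasFDerivAt) hnonneg fderiv_lipschitz_at
    _ ≤ √(4 * H * φ a) := by
      gcongr
      exacts [hnonneg a, by norm_num]
end

section
/- Let φ : ℝ → ℝ be a differentiable, non-negative function whose derivative is H-Lipschitz, where H > 0. Then for all a, a' ∈ ℝ, (φ(a) - φ(a'))² ≤ 6·H·(φ(a) + φ(a'))·(a - a')². -/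
/-!
A nonnegative function `f` with `K`-Lipschitz derivative lies below its first order expansion plus
`K / 2 * ‖y - x‖ ^ 2`. Nonnegativity of this upper bound along every line through `x` is a
discriminant condition, which reads `‖f' x‖ ≤ √(2 * K * f x)`. Inserted back into the upper bound,
it completes the square: `f y ≤ (√(f x) + √(K / 2) * ‖y - x‖) ^ 2`, so `√f` is
`√(K / 2)`-Lipschitz. Factoring `f x - f y` as a difference of squares then gives the inequality
with the constant `1`, attained in the limit `y → x` for `f x = x ^ 2`, in place of `6`.
-/

open Set
open scoped NNReal

theorem lipschitzWith_fderiv_iff_lipschitzWith_deriv {𝕜 F : Type*} [NontriviallyNormedField 𝕜]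
    [NormedAddCommGroup F] [NormedSpace 𝕜 F] {f : 𝕜 → F} {K : ℝ≥0} :
    LipschitzWith K (fderiv 𝕜 f) ↔ LipschitzWith K (deriv f) := by
  have fderiv_eq : fderiv 𝕜 f = ContinuousLinearMap.toSpanSingletonLIE 𝕜 F ∘ deriv f :=
    funext fun _ ↦ toSpanSingleton_deriv.symm
  simp only [fderiv_eq, LipschitzWith, Function.comp_apply, LinearIsometryEquiv.edist_map]

section NormedSpace

variable {E : Type*} [NormedAddCommGroup E] [NormedSpace ℝ E]

theorem norm_sub_sub_fderiv_le_of_lipschitzWith_fderiv {F : Type*} [NormedAddCommGroup F]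
    [NormedSpace ℝ F] {f : E → F} {K : ℝ≥0} (hf : Differentiable ℝ f)
    (hK : LipschitzWith K (fderiv ℝ f)) (x v : E) :
    ‖f (x + v) - f x - fderiv ℝ f x v‖ ≤ K / 2 * ‖v‖ ^ 2 := by
  let remainder (t : ℝ) : F := f (x + t • v) - f x - t • fderiv ℝ f x v
  have remainder_deriv (t : ℝ) :
      HasDerivAt remainder (fderiv ℝ f (x + t • v) v - fderiv ℝ f x v) t := by
    have line_deriv : HasDerivAt (fun t : ℝ ↦ x + t • v) v t := by
      simpa using ((hasDerivAt_id t).smul_const v).const_add x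
    simpa using (((hf _).hasFDerivAt.comp_hasDerivAt t line_deriv).sub_const (f x)).fun_sub
      ((hasDerivAt_id t).smul_const (fderiv ℝ f x v))
  have bound_deriv (t : ℝ) :
      HasDerivAt (fun t : ℝ ↦ K / 2 * ‖v‖ ^ 2 * t ^ 2) (K * t * ‖v‖ ^ 2) t := by
    refine ((hasDerivAt_pow 2 t).const_mul (K / 2 * ‖v‖ ^ 2)).congr_deriv ?_
    norm_num
    ring
  have deriv_le (t : ℝ) (ht : t ∈ Ico 0 1) :
      ‖fderiv ℝ f (x + t • v) v - fderiv ℝ f x v‖ ≤ K * t * ‖v‖ ^ 2 :=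
    calc ‖fderiv ℝ f (x + t • v) v - fderiv ℝ f x v‖
      _ ≤ ‖fderiv ℝ f (x + t • v) - fderiv ℝ f x‖ * ‖v‖ :=
        (fderiv ℝ f (x + t • v) - fderiv ℝ f x).le_opNorm v
      _ ≤ K * ‖x + t • v - x‖ * ‖v‖ := by gcongr; exact hK.norm_sub_le _ _
      _ = K * t * ‖v‖ ^ 2 := by
        rw [add_sub_cancel_left, norm_smul, Real.norm_of_nonneg ht.1]
        ring
  simpa [remainder] using image_norm_le_of_norm_deriv_right_le_deriv_boundary
    (fun t _ ↦ (remainder_deriv t).continuousAt.continuousWithinAt)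
    (fun t _ ↦ (remainder_deriv t).hasDerivWithinAt) (by simp [remainder]) bound_deriv deriv_le
    (right_mem_Icc.2 zero_le_one)

variable {f : E → ℝ} {K : ℝ≥0}

theorem le_add_fderiv_add_of_lipschitzWith_fderiv (hf : Differentiable ℝ f)
    (hK : LipschitzWith K (fderiv ℝ f)) (x v : E) :
    f (x + v) ≤ f x + fderiv ℝ f x v + K / 2 * ‖v‖ ^ 2 := by
  linarith [(Real.le_norm_self _).trans (norm_sub_sub_fderiv_le_of_lipschitzWith_fderiv hf hK x v)]

theorem norm_fderiv_le_sqrt_of_nonneg_of_lipschitzWith_fderiv (hf : Differentiable ℝ f)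
    (hf₀ : ∀ x, 0 ≤ f x) (hK : LipschitzWith K (fderiv ℝ f)) (x : E) :
    ‖fderiv ℝ f x‖ ≤ √(2 * K * f x) := by
  refine (fderiv ℝ f x).opNorm_le_bound (Real.sqrt_nonneg _) fun v ↦ ?_
  have quadratic_nonneg (t : ℝ) :
      0 ≤ K / 2 * ‖v‖ ^ 2 * (t * t) + fderiv ℝ f x v * t + f x :=
    calc 0
      _ ≤ f (x + t • v) := hf₀ _
      _ ≤ f x + fderiv ℝ f x (t • v) + K / 2 * ‖t • v‖ ^ 2 :=
        le_add_fderiv_add_of_lipschitzWith_fderiv hf hK x (t • v)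
      _ = K / 2 * ‖v‖ ^ 2 * (t * t) + fderiv ℝ f x v * t + f x := by
        rw [map_smul, smul_eq_mul, norm_smul, mul_pow, Real.norm_eq_abs, sq_abs]
        ring
  have discrim_nonpos := discrim_le_zero quadratic_nonneg
  rw [discrim] at discrim_nonpos
  calc ‖fderiv ℝ f x v‖
    _ ≤ √(2 * K * f x * ‖v‖ ^ 2) := Real.abs_le_sqrt (by linarith)
    _ = √(2 * K * f x) * ‖v‖ := by rw [Real.sqrt_mul' _ (sq_nonneg _), Real.sqrt_sq (norm_nonneg v)]

theorem lipschitzWith_sqrt_of_nonneg_of_lipschitzWith_fderiv (hf : Differentiable ℝ f)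
    (hf₀ : ∀ x, 0 ≤ f x) (hK : LipschitzWith K (fderiv ℝ f)) :
    LipschitzWith (NNReal.sqrt (K / 2)) fun x ↦ √(f x) := by
  refine LipschitzWith.of_le_add_mul _ fun y x ↦ ?_
  rw [Real.coe_sqrt, NNReal.coe_div, NNReal.coe_ofNat, dist_eq_norm]
  have sqrt_eq : √(2 * K * f x) = 2 * √(K / 2) * √(f x) := by
    rw [show 2 * K * f x = 2 ^ 2 * (K / 2) * f x by ring, Real.sqrt_mul (by positivity),
      Real.sqrt_mul (by positivity), Real.sqrt_sq zero_le_two]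
  refine (Real.sqrt_le_left (by positivity)).2 ?_
  calc f y
    _ ≤ f x + fderiv ℝ f x (y - x) + K / 2 * ‖y - x‖ ^ 2 := by
      simpa using le_add_fderiv_add_of_lipschitzWith_fderiv hf hK x (y - x)
    _ ≤ f x + √(2 * K * f x) * ‖y - x‖ + K / 2 * ‖y - x‖ ^ 2 := by
      gcongr
      exact (Real.le_norm_self _).trans <| (fderiv ℝ f x).le_of_opNorm_le
        (norm_fderiv_le_sqrt_of_nonneg_of_lipschitzWith_fderiv hf hf₀ hK x) _
    _ = √(f x) ^ 2 + 2 * √(K / 2) * √(f x) * ‖y - x‖ + √(K / 2) ^ 2 * ‖y - x‖ ^ 2 := by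
      rw [sqrt_eq, Real.sq_sqrt (hf₀ x), Real.sq_sqrt (by positivity)]
    _ = (√(f x) + √(K / 2) * ‖y - x‖) ^ 2 := by ring

theorem one_dim_H_bound_general (hf : Differentiable ℝ f) (hf₀ : ∀ x, 0 ≤ f x)
    (hK : LipschitzWith K (fderiv ℝ f)) (x y : E) :
    (f x - f y) ^ 2 ≤ K * (f x + f y) * ‖x - y‖ ^ 2 := by
  have sqrt_sub_le : |√(f x) - √(f y)| ≤ √(K / 2) * ‖x - y‖ := by
    simpa using
      (lipschitzWith_sqrt_of_nonneg_of_lipschitzWith_fderiv hf hf₀ hK).norm_sub_le x y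
  calc (f x - f y) ^ 2
    _ = (√(f x) ^ 2 - √(f y) ^ 2) ^ 2 := by rw [Real.sq_sqrt (hf₀ x), Real.sq_sqrt (hf₀ y)]
    _ = |√(f x) - √(f y)| ^ 2 * (√(f x) + √(f y)) ^ 2 := by rw [sq_abs]; ring
    _ ≤ (√(K / 2) * ‖x - y‖) ^ 2 * (2 * (√(f x) ^ 2 + √(f y) ^ 2)) := by
      gcongr
      exact add_sq_le
    _ = K * (f x + f y) * ‖x - y‖ ^ 2 := by
      rw [mul_pow, Real.sq_sqrt (by positivity), Real.sq_sqrt (hf₀ x), Real.sq_sqrt (hf₀ y)]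
      ring

end NormedSpace

/-- Lemma 5 (1-d case) of the paper: if `φ : ℝ → ℝ` is differentiable, non-negative,
and its derivative is `H`-Lipschitz (`H > 0`), then for all `a, a'`,
`(φ(a) - φ(a'))² ≤ 6·H·(φ(a) + φ(a'))·(a - a')²`. -/
theorem one_dim_H_bound (φ : ℝ → ℝ) (H : ℝ) (hH : 0 < H)
    (hdiff : Differentiable ℝ φ)
    (hnonneg : ∀ a : ℝ, 0 ≤ φ a)
    (hsmooth : ∀ a a' : ℝ, |deriv φ a - deriv φ a'| ≤ H * |a - a'|) :
    ∀ a a' : ℝ, (φ a - φ a') ^ 2 ≤ 6 * H * (φ a + φ a') * (a - a') ^ 2 := by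
  intro a a'
  lift H to ℝ≥0 using hH.le
  have fderiv_lipschitz : LipschitzWith H (fderiv ℝ φ) :=
    lipschitzWith_fderiv_iff_lipschitzWith_deriv.2 (.of_dist_le_mul hsmooth)
  calc (φ a - φ a') ^ 2
    _ ≤ H * (φ a + φ a') * |a - a'| ^ 2 :=
      one_dim_H_bound_general hdiff hnonneg fderiv_lipschitz a a'
    _ ≤ 6 * H * (φ a + φ a') * (a - a') ^ 2 := by
      rw [sq_abs]
      have := add_nonneg (hnonneg a) (hnonneg a')
      gcongr
      exact le_mul_of_one_le_left hH.le (by norm_num)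
end

section
/- Let φ : ℝ^k → ℝ be a differentiable function with H-Lipschitz gradient (with respect to the Euclidean norm), where H > 0, and suppose 0 ≤ φ(a) ≤ R for all a ∈ ℝ^k, where R > 0. Then for all a, a' ∈ ℝ^k, |φ(a) - φ(a')| ≤ √(12·H·R)·‖a - a'‖. -/
/-!
Integrating the Lipschitz bound on `f'` along the segments from `a` to `a ± t • v` shows that
`f (a + t • v) - f (a - t • v)` differs from `2 t f'(a) v` by at most `H t² ‖v‖²`. Since `f`
oscillates by at most `R`, this gives `2 t ‖f'(a) v‖ ≤ R + H ‖v‖² t²` for every real `t`, and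
nonpositivity of the discriminant of this quadratic reads `‖f'(a) v‖² ≤ H R ‖v‖²`
(Landau's inequality). The mean value inequality concludes.
-/

section NormedSpace

variable {E F : Type*} [NormedAddCommGroup E] [NormedSpace ℝ E]
  [NormedAddCommGroup F] [NormedSpace ℝ F] {f : E → F} {H R : ℝ}

theorem norm_image_sub_sub_fderiv_le_of_norm_fderiv_sub_le {a b : E}
    (hf : ∀ x ∈ segment ℝ a b, DifferentiableAt ℝ f x)
    (hlip : ∀ x ∈ segment ℝ a b, ‖fderiv ℝ f x - fderiv ℝ f a‖ ≤ H * ‖x - a‖) :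
    ‖f b - f a - fderiv ℝ f a (b - a)‖ ≤ H / 2 * ‖b - a‖ ^ 2 := by
  let γ : ℝ → E := AffineMap.lineMap a b
  have hγ_mem : ∀ t ∈ Set.Icc (0 : ℝ) 1, γ t ∈ segment ℝ a b := fun t ht ↦
    segment_eq_image_lineMap ℝ a b ▸ Set.mem_image_of_mem γ ht
  let remainder : ℝ → F := fun t ↦ f (γ t) - f a - t • fderiv ℝ f a (b - a)
  have hremainder : ∀ t ∈ Set.Icc (0 : ℝ) 1,
      HasDerivAt remainder ((fderiv ℝ f (γ t) - fderiv ℝ f a) (b - a)) t := fun t ht ↦ by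
    have hfγ := (hf _ (hγ_mem t ht)).hasFDerivAt.comp_hasDerivAt t AffineMap.hasDerivAt_lineMap
    exact ((hfγ.sub_const (f a)).sub
      ((hasDerivAt_id t).smul_const (fderiv ℝ f a (b - a)))).congr_deriv (by simp)
  have hmajorant : ∀ t : ℝ,
      HasDerivAt (fun s ↦ H / 2 * ‖b - a‖ ^ 2 * s ^ 2) (H * ‖b - a‖ ^ 2 * t) t := fun t ↦
    ((hasDerivAt_pow 2 t).const_mul (H / 2 * ‖b - a‖ ^ 2)).congr_deriv (by ring)
  have hderiv_le : ∀ t ∈ Set.Ico (0 : ℝ) 1,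
      ‖(fderiv ℝ f (γ t) - fderiv ℝ f a) (b - a)‖ ≤ H * ‖b - a‖ ^ 2 * t := fun t ht ↦
    calc ‖(fderiv ℝ f (γ t) - fderiv ℝ f a) (b - a)‖
        ≤ H * ‖γ t - a‖ * ‖b - a‖ :=
          ContinuousLinearMap.le_of_opNorm_le _ (hlip _ (hγ_mem t ⟨ht.1, ht.2.le⟩)) _
      _ = H * ‖b - a‖ ^ 2 * t := by
          rw [← vsub_eq_sub (γ t), AffineMap.lineMap_vsub_left, norm_smul, vsub_eq_sub,
            Real.norm_of_nonneg ht.1]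
          ring
  simpa [remainder, γ] using image_norm_le_of_norm_deriv_right_le_deriv_boundary
    (fun t ht ↦ (hremainder t ht).continuousAt.continuousWithinAt)
    (fun t ht ↦ (hremainder t ⟨ht.1, ht.2.le⟩).hasDerivWithinAt)
    (by simp [remainder, γ]) hmajorant hderiv_le (Set.right_mem_Icc.2 zero_le_one)

theorem norm_image_add_sub_image_sub_sub_two_smul_fderiv_le {a : E} (hf : Differentiable ℝ f)
    (hlip : ∀ x, ‖fderiv ℝ f x - fderiv ℝ f a‖ ≤ H * ‖x - a‖) (v : E) :
    ‖f (a + v) - f (a - v) - (2 : ℝ) • fderiv ℝ f a v‖ ≤ H * ‖v‖ ^ 2 := by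
  have htaylor (w : E) : ‖f (a + w) - f a - fderiv ℝ f a w‖ ≤ H / 2 * ‖w‖ ^ 2 := by
    simpa using norm_image_sub_sub_fderiv_le_of_norm_fderiv_sub_le (b := a + w)
      (fun x _ ↦ hf x) (fun x _ ↦ hlip x)
  calc ‖f (a + v) - f (a - v) - (2 : ℝ) • fderiv ℝ f a v‖
      = ‖(f (a + v) - f a - fderiv ℝ f a v) - (f (a + -v) - f a - fderiv ℝ f a (-v))‖ := by
        rw [map_neg, ← sub_eq_add_neg, two_smul]
        congr 1
        abel
    _ ≤ H / 2 * ‖v‖ ^ 2 + H / 2 * ‖-v‖ ^ 2 := norm_sub_le_of_le (htaylor v) (htaylor (-v))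
    _ = H * ‖v‖ ^ 2 := by rw [norm_neg]; ring

theorem norm_fderiv_apply_sq_le_of_norm_image_sub_le {a : E} (hf : Differentiable ℝ f)
    (hosc : ∀ x y, ‖f x - f y‖ ≤ R)
    (hlip : ∀ x, ‖fderiv ℝ f x - fderiv ℝ f a‖ ≤ H * ‖x - a‖) (v : E) :
    ‖fderiv ℝ f a v‖ ^ 2 ≤ ‖v‖ ^ 2 * (H * R) := by
  have hquadratic (t : ℝ) :
      0 ≤ H * ‖v‖ ^ 2 * (t * t) + -(2 * ‖fderiv ℝ f a v‖) * t + R := by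
    have hcentral := norm_image_add_sub_image_sub_sub_two_smul_fderiv_le hf hlip (t • v)
    have hle : 2 * t * ‖fderiv ℝ f a v‖ ≤ R + H * ‖t • v‖ ^ 2 :=
      calc 2 * t * ‖fderiv ℝ f a v‖ ≤ |2 * t| * ‖fderiv ℝ f a v‖ := by gcongr; exact le_abs_self _
        _ = ‖(2 : ℝ) • fderiv ℝ f a (t • v)‖ := by
          rw [map_smul, smul_smul, norm_smul, Real.norm_eq_abs]
        _ ≤ ‖f (a + t • v) - f (a - t • v)‖
            + ‖f (a + t • v) - f (a - t • v) - (2 : ℝ) • fderiv ℝ f a (t • v)‖ :=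
          norm_le_norm_add_norm_sub _ _
        _ ≤ R + H * ‖t • v‖ ^ 2 := add_le_add (hosc _ _) hcentral
    rw [norm_smul, mul_pow, Real.norm_eq_abs, sq_abs] at hle
    linarith
  have hdiscrim := discrim_le_zero hquadratic
  rw [discrim] at hdiscrim
  linarith

theorem norm_fderiv_le_sqrt_of_norm_image_sub_le {a : E} (hf : Differentiable ℝ f)
    (hosc : ∀ x y, ‖f x - f y‖ ≤ R)
    (hlip : ∀ x, ‖fderiv ℝ f x - fderiv ℝ f a‖ ≤ H * ‖x - a‖) :
    ‖fderiv ℝ f a‖ ≤ √(H * R) := by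
  refine ContinuousLinearMap.opNorm_le_bound _ (Real.sqrt_nonneg _) fun v ↦ ?_
  calc ‖fderiv ℝ f a v‖ ≤ √(‖v‖ ^ 2 * (H * R)) :=
        Real.le_sqrt_of_sq_le (norm_fderiv_apply_sq_le_of_norm_image_sub_le hf hosc hlip v)
    _ = √(H * R) * ‖v‖ := by
        rw [Real.sqrt_mul (sq_nonneg _), Real.sqrt_sq (norm_nonneg v), mul_comm]

theorem bounded_smooth_lipschitz_general (hf : Differentiable ℝ f)
    (hosc : ∀ x y, ‖f x - f y‖ ≤ R)
    (hlip : ∀ x y, ‖fderiv ℝ f x - fderiv ℝ f y‖ ≤ H * ‖x - y‖) (x y : E) :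
    ‖f x - f y‖ ≤ √(H * R) * ‖x - y‖ :=
  convex_univ.norm_image_sub_le_of_norm_fderiv_le (fun z _ ↦ hf z)
    (fun z _ ↦ norm_fderiv_le_sqrt_of_norm_image_sub_le hf hosc (hlip · z))
    (Set.mem_univ y) (Set.mem_univ x)

end NormedSpace

theorem norm_gradient_sub_gradient {𝕜 E : Type*} [RCLike 𝕜] [NormedAddCommGroup E]
    [InnerProductSpace 𝕜 E] [CompleteSpace E] (f g : E → 𝕜) (x y : E) :
    ‖gradient f x - gradient g y‖ = ‖fderiv 𝕜 f x - fderiv 𝕜 g y‖ := by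
  rw [gradient, gradient, ← map_sub, LinearIsometryEquiv.norm_map]

/-- If `φ : ℝ^k → ℝ` is differentiable with `H`-Lipschitz gradient (`H > 0`) and
`0 ≤ φ(a) ≤ R` for all `a` (`R > 0`), then `φ` is `√(12·H·R)`-Lipschitz:
`|φ(a) - φ(a')| ≤ √(12·H·R)·‖a - a'‖`. -/
theorem bounded_smooth_lipschitz {k : ℕ}
    (φ : EuclideanSpace ℝ (Fin k) → ℝ) (H R : ℝ) (hH : 0 < H) (hR : 0 < R)
    (hdiff : Differentiable ℝ φ)
    (hbound : ∀ a : EuclideanSpace ℝ (Fin k), 0 ≤ φ a ∧ φ a ≤ R)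
    (hsmooth : ∀ a a' : EuclideanSpace ℝ (Fin k),
      ‖gradient φ a - gradient φ a'‖ ≤ H * ‖a - a'‖) :
    ∀ a a' : EuclideanSpace ℝ (Fin k),
      |φ a - φ a'| ≤ Real.sqrt (12 * H * R) * ‖a - a'‖ := by
  intro a a'
  have hosc (x y) : ‖φ x - φ y‖ ≤ R :=
    abs_sub_le_of_nonneg_of_le (hbound x).1 (hbound x).2 (hbound y).1 (hbound y).2
  simp only [norm_gradient_sub_gradient] at hsmooth
  calc |φ a - φ a'| ≤ √(H * R) * ‖a - a'‖ :=
        bounded_smooth_lipschitz_general hdiff hosc hsmooth a a'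
    _ ≤ √(12 * H * R) * ‖a - a'‖ := by gcongr; linarith
end

section
/- Let X be a set of contexts and let π, π̂ : X × ℝ^k → ℝ^k be policies that are each γ-Lipschitz in the action component for some γ ∈ (0,1) (for every fixed x and all a, a', ‖π(x,a) − π(x,a')‖ ≤ γ‖a − a'‖ and likewise for π̂). Fix β ∈ (0,1) and define π'(x,a) = β·π̂(x,a) + (1−β)·π(x,a). Fix a context sequence x₁,…,x_T and an initial action a₀, and define the roll-outs a_t = π(x_t, a_{t−1}) and a'_t = π'(x_t, a'_{t−1}) with a'₀ = a₀. Suppose ε ≥ 0 satisfies ‖π̂(x_t, a_{t−1}) − π(x_t, a_{t−1})‖ ≤ ε for all t = 1,…,T. Then for every t = 0,1,…,T, ‖a'_t − a_t‖ ≤ β·ε / ((1−β)·(1−γ)). -/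
/-!
A convex combination of `γ`-Lipschitz policies is again `γ`-Lipschitz, and along the roll-out `a`
of `π` the interpolated policy `π'` differs from `π` by `β • (π̂ - π)`. So `a` is an orbit of `π'`
up to an error `β ε` per step, and since `π'` contracts by `γ`, the radius `r = β ε / (1 - γ)`, the
fixed point of `r ↦ γ r + β ε`, bounds the distance between the two roll-outs at all times. The
factor `1 / (1 - β)` in the theorem only weakens this bound.
-/

open scoped NNReal

section PseudoOrbit

variable {α : Type*} [PseudoMetricSpace α] {K : ℝ≥0} {f : ℕ → α → α} {u v : ℕ → α} {δ r : ℝ} {T : ℕ}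

theorem dist_orbit_pseudoOrbit_le (hf : ∀ t < T, LipschitzWith K (f t))
    (hu : ∀ t < T, u (t + 1) = f t (u t)) (hv : ∀ t < T, dist (f t (v t)) (v (t + 1)) ≤ δ)
    (hr : K * r + δ ≤ r) (h₀ : dist (u 0) (v 0) ≤ r) {t : ℕ} (ht : t ≤ T) :
    dist (u t) (v t) ≤ r := by
  induction t with
  | zero => exact h₀
  | succ t ih =>
    calc dist (u (t + 1)) (v (t + 1))
      _ = dist (f t (u t)) (v (t + 1)) := by rw [hu t ht]
      _ ≤ dist (f t (u t)) (f t (v t)) + dist (f t (v t)) (v (t + 1)) := dist_triangle _ _ _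
      _ ≤ K * dist (u t) (v t) + δ := add_le_add ((hf t ht).dist_le_mul _ _) (hv t ht)
      _ ≤ K * r + δ := by gcongr; exact ih (Nat.le_of_lt ht)
      _ ≤ r := hr

end PseudoOrbit

theorem convex_setOf_lipschitzWith {α E : Type*} [PseudoEMetricSpace α] [SeminormedAddCommGroup E]
    [NormedSpace ℝ E] (K : ℝ≥0) : Convex ℝ {f : α → E | LipschitzWith K f} := by
  intro f hf g hg b c hb hc hbc
  lift b to ℝ≥0 using hb
  lift c to ℝ≥0 using hc
  have hK : ‖(b : ℝ)‖₊ * K + ‖(c : ℝ)‖₊ * K = K := by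
    rw [NNReal.nnnorm_eq, NNReal.nnnorm_eq, ← add_mul, show b + c = 1 from mod_cast hbc, one_mul]
  have hsum := ((lipschitzWith_smul (b : ℝ)).comp hf).add ((lipschitzWith_smul (c : ℝ)).comp hg)
  rwa [hK] at hsum

section Policy

variable {X A : Type*}

/-- The roll-out of the policy `π` on the contexts `x 1, x 2, …` from the initial action `a₀`,
as a predicate on the action sequence `a`. The value `x 0` is never read. -/
structure IsRollout (π : X × A → A) (x : ℕ → X) (a₀ : A) (a : ℕ → A) : Prop where
  zero : a 0 = a₀
  succ (t : ℕ) : a (t + 1) = π (x (t + 1), a t)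

/-- Stability Condition 2: the policy `π` is `γ`-Lipschitz in the action component. -/
def IsActionLipschitz [PseudoEMetricSpace A] (γ : ℝ≥0) (π : X × A → A) : Prop :=
  ∀ x, LipschitzWith γ fun a ↦ π (x, a)

theorem isActionLipschitz_iff_norm_sub_le [SeminormedAddCommGroup A] {γ : ℝ≥0} {π : X × A → A} :
    IsActionLipschitz γ π ↔ ∀ x a a', ‖π (x, a) - π (x, a')‖ ≤ γ * ‖a - a'‖ := by
  simp only [IsActionLipschitz, lipschitzWith_iff_dist_le_mul, dist_eq_norm_sub]

variable [SeminormedAddCommGroup A] [NormedSpace ℝ A]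

theorem convex_setOf_isActionLipschitz (γ : ℝ≥0) :
    Convex ℝ {π : X × A → A | IsActionLipschitz γ π} :=
  fun _ hπ _ hρ _ _ hb hc hbc x ↦ convex_setOf_lipschitzWith γ (hπ x) (hρ x) hb hc hbc

theorem interpolated_rollout_deviation_bound_general {π πhat : X × A → A} {γ : ℝ≥0} (hγ : γ < 1)
    (hπ : IsActionLipschitz γ π) (hπhat : IsActionLipschitz γ πhat)
    {β : ℝ} (hβ : β ∈ Set.Icc (0 : ℝ) 1) {x : ℕ → X} {a₀ : A} {a a' : ℕ → A}
    (ha : IsRollout π x a₀ a) (ha' : IsRollout (β • πhat + (1 - β) • π) x a₀ a')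
    {T : ℕ} {ε : ℝ} (hε : 0 ≤ ε)
    (hclose : ∀ t < T, ‖πhat (x (t + 1), a t) - π (x (t + 1), a t)‖ ≤ ε) {t : ℕ} (ht : t ≤ T) :
    ‖a' t - a t‖ ≤ β * ε / (1 - γ) := by
  have hγ' : 0 < 1 - (γ : ℝ) := sub_pos.2 (mod_cast hγ)
  have hlip : IsActionLipschitz γ (β • πhat + (1 - β) • π) :=
    convex_setOf_isActionLipschitz γ hπhat hπ hβ.1 (sub_nonneg.2 hβ.2) (add_sub_cancel _ _)
  have hstep (t : ℕ) (ht : t < T) :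
      dist ((β • πhat + (1 - β) • π) (x (t + 1), a t)) (a (t + 1)) ≤ β * ε := by
    have hdiff : (β • πhat + (1 - β) • π) (x (t + 1), a t) - a (t + 1) =
        β • (πhat (x (t + 1), a t) - π (x (t + 1), a t)) := by
      rw [ha.succ, Pi.add_apply, Pi.smul_apply, Pi.smul_apply]
      module
    rw [dist_eq_norm_sub, hdiff, norm_smul, Real.norm_of_nonneg hβ.1]
    exact mul_le_mul_of_nonneg_left (hclose t ht) hβ.1
  have hradius : γ * (β * ε / (1 - γ)) + β * ε ≤ β * ε / (1 - γ) := by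
    apply le_of_eq
    field_simp
    ring
  have hinit : dist (a' 0) (a 0) ≤ β * ε / (1 - γ) := by
    rw [ha'.zero, ha.zero, dist_self]
    exact div_nonneg (mul_nonneg hβ.1 hε) hγ'.le
  rw [← dist_eq_norm_sub]
  exact dist_orbit_pseudoOrbit_le (fun t _ ↦ hlip (x (t + 1))) (fun t _ ↦ ha'.succ t)
    hstep hradius hinit ht

end Policy

/-- The key claim in the proof of Theorem 2 of the paper: for policies `π, π̂` that are
`γ`-Lipschitz in the action component (`γ ∈ (0,1)`), the roll-out of the interpolation
`π' = β·π̂ + (1−β)·π` stays within `β·ε/((1−β)·(1−γ))` of the roll-out of `π`, where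
`ε` bounds `‖π̂ − π‖` along the roll-out of `π`. -/
theorem interpolated_rollout_deviation_bound {X : Type*} {k : ℕ}
    (π πhat : X × EuclideanSpace ℝ (Fin k) → EuclideanSpace ℝ (Fin k))
    (γ : ℝ) (hγ : γ ∈ Set.Ioo (0 : ℝ) 1)
    (hπ : ∀ (x : X) (a a' : EuclideanSpace ℝ (Fin k)),
      ‖π (x, a) - π (x, a')‖ ≤ γ * ‖a - a'‖)
    (hπhat : ∀ (x : X) (a a' : EuclideanSpace ℝ (Fin k)),
      ‖πhat (x, a) - πhat (x, a')‖ ≤ γ * ‖a - a'‖)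
    (β : ℝ) (hβ : β ∈ Set.Ioo (0 : ℝ) 1)
    (π' : X × EuclideanSpace ℝ (Fin k) → EuclideanSpace ℝ (Fin k))
    (hπ' : ∀ (x : X) (a : EuclideanSpace ℝ (Fin k)),
      π' (x, a) = β • πhat (x, a) + (1 - β) • π (x, a))
    (T : ℕ) (x : ℕ → X) (a₀ : EuclideanSpace ℝ (Fin k))
    (a a' : ℕ → EuclideanSpace ℝ (Fin k))
    (ha0 : a 0 = a₀) (ha'0 : a' 0 = a₀)
    (ha : ∀ t : ℕ, a (t + 1) = π (x (t + 1), a t))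
    (ha' : ∀ t : ℕ, a' (t + 1) = π' (x (t + 1), a' t))
    (ε : ℝ) (hε : 0 ≤ ε)
    (hclose : ∀ t : ℕ, 1 ≤ t → t ≤ T →
      ‖πhat (x t, a (t - 1)) - π (x t, a (t - 1))‖ ≤ ε) :
    ∀ t : ℕ, t ≤ T → ‖a' t - a t‖ ≤ β * ε / ((1 - β) * (1 - γ)) := by
  intro t ht
  lift γ to ℝ≥0 using hγ.1.le
  obtain rfl : π' = β • πhat + (1 - β) • π := funext fun y ↦ hπ' y.1 y.2
  have hγ' : 0 < 1 - (γ : ℝ) := sub_pos.2 hγ.2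
  have hβ' : 0 < 1 - β := sub_pos.2 hβ.2
  calc ‖a' t - a t‖
    _ ≤ β * ε / (1 - γ) := interpolated_rollout_deviation_bound_general (mod_cast hγ.2)
        (isActionLipschitz_iff_norm_sub_le.2 hπ) (isActionLipschitz_iff_norm_sub_le.2 hπhat)
        (Set.Ioo_subset_Icc_self hβ) ⟨ha0, ha⟩ ⟨ha'0, ha'⟩ hε
        (fun t ht ↦ hclose (t + 1) t.succ_pos ht) ht
    _ ≤ β * ε / ((1 - β) * (1 - γ)) :=
        div_le_div_of_nonneg_left (mul_nonneg hβ.1.le hε) (mul_pos hβ' hγ')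
          (mul_le_of_le_one_left hγ'.le (sub_le_self 1 hβ.1.le))
end

section
/- Let X be a set of contexts and let π, π̂ : X × ℝ^k → ℝ^k be policies that are each γ-Lipschitz in the action component for some γ ∈ (0,1). Let ℓ : ℝ^k → ℝ be convex and L-Lipschitz. Fix β ∈ (0,1) and define the interpolated policy π'(x,a) = β·π̂(x,a) + (1−β)·π(x,a). Fix a context sequence x₁,…,x_T and an initial action a₀, and define the roll-outs a_t = π(x_t, a_{t−1}) and a'_t = π'(x_t, a'_{t−1}) with a'₀ = a₀. Suppose ε ≥ 0 satisfies ‖π̂(x_t, a_{t−1}) − π(x_t, a_{t−1})‖ ≤ ε for all t = 1,…,T. Then (1/T)·Σ_{t=1}^T ℓ(a'_t) − (1/T)·Σ_{t=1}^T ℓ(a_t) ≤ β·γ·ε·L / ((1−β)·(1−γ)) + β·[(1/T)·Σ_{t=1}^T ℓ(π̂(x_t, a_{t−1})) − (1/T)·Σ_{t=1}^T ℓ(a_t)]. -/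
/-!
Let `b t = π' (x t, a (t - 1))` be one step of the interpolated policy from a state visited by `π`.
It is off `a t` by at most `β * ε`, so, `π'` being a contraction, the roll-outs `a'` and `a` never
drift further apart than the fixed point `β * ε / (1 - γ)` of `r ↦ γ * r + β * ε`. One more
contraction puts `a' t` within `γ * (β * ε / (1 - γ))` of `b t`; the Lipschitz bound on `ℓ` pays for
this gap, and convexity bounds `ℓ (b t)` by the interpolated losses.
-/

open Finset
open scoped BigOperators

-- `δ / (1 - γ)` is the fixed point of `r ↦ γ * r + δ`.
lemma le_div_one_sub_of_le_mul_add {u : ℕ → ℝ} {γ δ : ℝ} {T : ℕ} (hγ₀ : 0 ≤ γ) (hγ₁ : γ < 1)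
    (h_zero : u 0 ≤ δ / (1 - γ)) (h_succ : ∀ t < T, u (t + 1) ≤ γ * u t + δ) :
    ∀ t ≤ T, u t ≤ δ / (1 - γ) := by
  intro t
  induction t with
  | zero => exact fun _ ↦ h_zero
  | succ t ih =>
    intro ht
    have h_ne : 1 - γ ≠ 0 := (sub_pos.2 hγ₁).ne'
    calc u (t + 1) ≤ γ * u t + δ := h_succ t ht
      _ ≤ γ * (δ / (1 - γ)) + δ := by gcongr; exact ih (Nat.le_of_succ_le ht)
      _ = δ / (1 - γ) := by field_simp; ring

lemma le_of_convexOn_of_norm_sub_le {E : Type*} [SeminormedAddCommGroup E] [NormedSpace ℝ E]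
    {ℓ : E → ℝ} {L β r : ℝ} {u v w : E} (h_conv : ConvexOn ℝ Set.univ ℓ) (hL : 0 ≤ L)
    (h_lip : ∀ u v, |ℓ u - ℓ v| ≤ L * ‖u - v‖) (hβ₀ : 0 ≤ β) (hβ₁ : β ≤ 1)
    (h_near : ‖u - (β • v + (1 - β) • w)‖ ≤ r) :
    ℓ u ≤ L * r + (β * ℓ v + (1 - β) * ℓ w) := by
  calc ℓ u ≤ L * ‖u - (β • v + (1 - β) • w)‖ + ℓ (β • v + (1 - β) • w) :=
        sub_le_iff_le_add.1 ((le_abs_self _).trans (h_lip _ _))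
    _ ≤ L * r + (β * ℓ v + (1 - β) * ℓ w) := by
        gcongr
        exact h_conv.2 trivial trivial hβ₀ (sub_nonneg.2 hβ₁) (add_sub_cancel _ _)

section Policies

variable {X E : Type*}

/-- The sequence of actions `a` is a roll-out of the policy `π` on the contexts `x 1, x 2, …`
from the initial action `a 0`. -/
def IsRollout_s8 (π : X × E → E) (x : ℕ → X) (a : ℕ → E) : Prop :=
  ∀ t, a (t + 1) = π (x (t + 1), a t)

/-- The average of the per-step loss `ℓ` over the actions `b 1, …, b T`. For a roll-out `b = a` this
is the trajectory loss; for `b t = πhat (x t, a (t - 1))` it is the loss of `πhat` on the states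
visited by `a`. -/
noncomputable def trajectoryLoss (ℓ : E → ℝ) (T : ℕ) (b : ℕ → E) : ℝ :=
  (1 / T : ℝ) * ∑ t ∈ Icc 1 T, ℓ (b t)

lemma trajectoryLoss_eq_expect (ℓ : E → ℝ) (T : ℕ) (b : ℕ → E) :
    trajectoryLoss ℓ T b = 𝔼 t ∈ Icc 1 T, ℓ (b t) := by
  rw [trajectoryLoss, expect_eq_sum_div_card, Nat.card_Icc, Nat.add_sub_cancel, one_div_mul_eq_div]

lemma trajectoryLoss_sub_le_of_forall_le {ℓ : E → ℝ} {T : ℕ} {a b c : ℕ → E} {β C : ℝ}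
    (hT : 1 ≤ T) (h : ∀ t ∈ Icc 1 T, ℓ (c t) ≤ C + (β * ℓ (b t) + (1 - β) * ℓ (a t))) :
    trajectoryLoss ℓ T c - trajectoryLoss ℓ T a
      ≤ C + β * (trajectoryLoss ℓ T b - trajectoryLoss ℓ T a) := by
  have h_avg := expect_le_expect h
  rw [expect_add_distrib, expect_add_distrib, expect_const (nonempty_Icc.2 hT), ← mul_expect,
    ← mul_expect] at h_avg
  simp only [trajectoryLoss_eq_expect]
  linarith

variable [SeminormedAddCommGroup E]

/-- Stability Condition 2: for each fixed context, the policy is `γ`-Lipschitz in the action. -/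
def ActionLipschitz (γ : ℝ) (π : X × E → E) : Prop :=
  ∀ (x : X) (a a' : E), ‖π (x, a) - π (x, a')‖ ≤ γ * ‖a - a'‖

lemma IsRollout_s8.norm_sub_le {π π' : X × E → E} {x : ℕ → X} {a a' : ℕ → E} {γ δ : ℝ} {T : ℕ}
    (ha : IsRollout_s8 π x a) (ha' : IsRollout_s8 π' x a') (h_init : a' 0 = a 0)
    (hπ' : ActionLipschitz γ π') (hγ₀ : 0 ≤ γ) (hγ₁ : γ < 1) (hδ : 0 ≤ δ)
    (h_close : ∀ t < T, ‖π' (x (t + 1), a t) - π (x (t + 1), a t)‖ ≤ δ) :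
    ∀ t ≤ T, ‖a' t - a t‖ ≤ δ / (1 - γ) := by
  refine le_div_one_sub_of_le_mul_add hγ₀ hγ₁ ?_ fun t ht ↦ ?_
  · rw [h_init, sub_self, norm_zero]
    exact div_nonneg hδ (sub_nonneg.2 hγ₁.le)
  · rw [ha t, ha' t]
    exact (norm_sub_le_norm_sub_add_norm_sub _ (π' (x (t + 1), a t)) _).trans
      (add_le_add (hπ' _ _ _) (h_close t ht))

variable [NormedSpace ℝ E]

/-- The policy `π' = β • πhat + (1 - β) • π` that moves the old policy `π` towards the new policy
`πhat`. -/
def interpolatedPolicy (β : ℝ) (πhat π : X × E → E) : X × E → E :=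
  fun p ↦ β • πhat p + (1 - β) • π p

lemma interpolatedPolicy_sub_right (β : ℝ) (πhat π : X × E → E) (p : X × E) :
    interpolatedPolicy β πhat π p - π p = β • (πhat p - π p) := by
  rw [interpolatedPolicy]; module

lemma ActionLipschitz.interpolate {π πhat : X × E → E} {γ β : ℝ}
    (hπhat : ActionLipschitz γ πhat) (hπ : ActionLipschitz γ π) (hβ₀ : 0 ≤ β) (hβ₁ : β ≤ 1) :
    ActionLipschitz γ (interpolatedPolicy β πhat π) := by
  intro x a a'
  have hβ₁' : 0 ≤ 1 - β := sub_nonneg.2 hβ₁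
  calc ‖interpolatedPolicy β πhat π (x, a) - interpolatedPolicy β πhat π (x, a')‖
      = ‖β • (πhat (x, a) - πhat (x, a')) + (1 - β) • (π (x, a) - π (x, a'))‖ := by
        simp only [interpolatedPolicy]; congr 1; module
    _ ≤ β * ‖πhat (x, a) - πhat (x, a')‖ + (1 - β) * ‖π (x, a) - π (x, a')‖ := by
        refine (norm_add_le _ _).trans_eq ?_
        rw [norm_smul_of_nonneg hβ₀, norm_smul_of_nonneg hβ₁']
    _ ≤ β * (γ * ‖a - a'‖) + (1 - β) * (γ * ‖a - a'‖) := by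
        gcongr
        exacts [hπhat x a a', hπ x a a']
    _ = γ * ‖a - a'‖ := by ring

theorem policy_improvement_general {π πhat : X × E → E} {ℓ : E → ℝ} {x : ℕ → X} {a a' : ℕ → E}
    {γ L β ε : ℝ} {T : ℕ} (hγ₀ : 0 ≤ γ) (hγ₁ : γ < 1) (hβ₀ : 0 ≤ β) (hβ₁ : β ≤ 1)
    (hπ' : ActionLipschitz γ (interpolatedPolicy β πhat π))
    (h_conv : ConvexOn ℝ Set.univ ℓ) (hL : 0 ≤ L) (h_lip : ∀ u v, |ℓ u - ℓ v| ≤ L * ‖u - v‖)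
    (hT : 1 ≤ T) (ha : IsRollout_s8 π x a) (ha' : IsRollout_s8 (interpolatedPolicy β πhat π) x a')
    (h_init : a' 0 = a 0) (hε : 0 ≤ ε)
    (h_close : ∀ t < T, ‖πhat (x (t + 1), a t) - π (x (t + 1), a t)‖ ≤ ε) :
    trajectoryLoss ℓ T a' - trajectoryLoss ℓ T a
      ≤ β * γ * ε * L / (1 - γ)
        + β * (trajectoryLoss ℓ T (fun t ↦ πhat (x t, a (t - 1))) - trajectoryLoss ℓ T a) := by
  set π' := interpolatedPolicy β πhat π with hπ'_def
  have h_drift : ∀ t ≤ T, ‖a' t - a t‖ ≤ β * ε / (1 - γ) := by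
    refine ha.norm_sub_le ha' h_init hπ' hγ₀ hγ₁ (by positivity) fun t ht ↦ ?_
    rw [hπ'_def, interpolatedPolicy_sub_right, norm_smul_of_nonneg hβ₀]
    gcongr
    exact h_close t ht
  refine trajectoryLoss_sub_le_of_forall_le hT fun t ht ↦ ?_
  obtain ⟨ht₁, htT⟩ := mem_Icc.1 ht
  obtain ⟨s, rfl⟩ := Nat.exists_eq_add_of_le' ht₁
  have h_step : ‖a' (s + 1) - π' (x (s + 1), a s)‖ ≤ γ * (β * ε / (1 - γ)) := by
    rw [ha' s]
    refine (hπ' _ _ _).trans ?_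
    gcongr
    exact h_drift s (Nat.le_of_succ_le htT)
  have h_loss := le_of_convexOn_of_norm_sub_le h_conv hL h_lip hβ₀ hβ₁ h_step
  rw [← ha s] at h_loss
  exact h_loss.trans_eq (by rw [Nat.add_sub_cancel]; ring)

end Policies

/-- Theorem 2 of the paper (policy improvement, `T`-independent): for `γ`-Lipschitz
(in action, `γ ∈ (0,1)`) policies `π, π̂`, convex `L`-Lipschitz loss `ℓ`, and
interpolation `π' = β·π̂ + (1−β)·π`, the trajectory loss of `π'` exceeds that of `π`
by at most `β·γ·ε·L/((1−β)(1−γ)) + β·(ℓ_π(π̂) − ℓ_π(π))`. -/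
theorem policy_improvement {X : Type*} {k : ℕ}
    (π πhat : X × EuclideanSpace ℝ (Fin k) → EuclideanSpace ℝ (Fin k))
    (γ : ℝ) (hγ : γ ∈ Set.Ioo (0 : ℝ) 1)
    (hπ : ∀ (x : X) (a a' : EuclideanSpace ℝ (Fin k)),
      ‖π (x, a) - π (x, a')‖ ≤ γ * ‖a - a'‖)
    (hπhat : ∀ (x : X) (a a' : EuclideanSpace ℝ (Fin k)),
      ‖πhat (x, a) - πhat (x, a')‖ ≤ γ * ‖a - a'‖)
    (ℓ : EuclideanSpace ℝ (Fin k) → ℝ)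
    (hconv : ConvexOn ℝ Set.univ ℓ)
    (L : ℝ) (hL0 : 0 ≤ L)
    (hlip : ∀ u v : EuclideanSpace ℝ (Fin k), |ℓ u - ℓ v| ≤ L * ‖u - v‖)
    (β : ℝ) (hβ : β ∈ Set.Ioo (0 : ℝ) 1)
    (π' : X × EuclideanSpace ℝ (Fin k) → EuclideanSpace ℝ (Fin k))
    (hπ' : ∀ (x : X) (a : EuclideanSpace ℝ (Fin k)),
      π' (x, a) = β • πhat (x, a) + (1 - β) • π (x, a))
    (T : ℕ) (hT : 1 ≤ T) (x : ℕ → X) (a₀ : EuclideanSpace ℝ (Fin k))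
    (a a' : ℕ → EuclideanSpace ℝ (Fin k))
    (ha0 : a 0 = a₀) (ha'0 : a' 0 = a₀)
    (ha : ∀ t : ℕ, a (t + 1) = π (x (t + 1), a t))
    (ha' : ∀ t : ℕ, a' (t + 1) = π' (x (t + 1), a' t))
    (ε : ℝ) (hε : 0 ≤ ε)
    (hclose : ∀ t : ℕ, 1 ≤ t → t ≤ T →
      ‖πhat (x t, a (t - 1)) - π (x t, a (t - 1))‖ ≤ ε) :
    (1 / T : ℝ) * ∑ t ∈ Finset.Icc 1 T, ℓ (a' t)
      - (1 / T : ℝ) * ∑ t ∈ Finset.Icc 1 T, ℓ (a t)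
    ≤ β * γ * ε * L / ((1 - β) * (1 - γ))
      + β * ((1 / T : ℝ) * ∑ t ∈ Finset.Icc 1 T, ℓ (πhat (x t, a (t - 1)))
        - (1 / T : ℝ) * ∑ t ∈ Finset.Icc 1 T, ℓ (a t)) := by
  obtain ⟨hγ₀, hγ₁⟩ := hγ
  obtain ⟨hβ₀, hβ₁⟩ := hβ
  obtain rfl : π' = interpolatedPolicy β πhat π := funext fun p ↦ hπ' p.1 p.2
  have hπ'_lip := ActionLipschitz.interpolate hπhat hπ hβ₀.le hβ₁.le
  have h_sharp := policy_improvement_general hγ₀.le hγ₁ hβ₀.le hβ₁.le hπ'_lip hconv hL0 hlip hT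
    ha ha' (ha'0.trans ha0.symm) hε fun t ht ↦ hclose (t + 1) t.succ_pos ht
  -- The stated constant is weaker than the one just obtained by the factor `1 / (1 - β) ≥ 1`.
  refine h_sharp.trans (add_le_add_left (div_le_div_of_nonneg_left (by positivity) ?_ ?_) _)
  · exact mul_pos (sub_pos.2 hβ₁) (sub_pos.2 hγ₁)
  · exact mul_le_of_le_one_left (sub_nonneg.2 hγ₁.le) (sub_le_self _ hβ₀.le)
end

section
/- Let X be a set of contexts and let π, π̂ : X × ℝ^k → ℝ^k be policies that are each non-expansive in the action component (for every fixed x and all a, a', ‖π(x,a) − π(x,a')‖ ≤ ‖a − a'‖ and likewise for π̂). Fix β ∈ (0,1) and define π'(x,a) = β·π̂(x,a) + (1−β)·π(x,a). Fix a context sequence x₁,…,x_T and an initial action a₀, and define the roll-outs a_t = π(x_t, a_{t−1}) and a'_t = π'(x_t, a'_{t−1}) with a'₀ = a₀. Suppose ε ≥ 0 satisfies ‖π̂(x_t, a_{t−1}) − π(x_t, a_{t−1})‖ ≤ ε for all t = 1,…,T. Then for every t = 0,1,…,T, ‖a'_t − a_t‖ ≤ β·ε·t. -/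
/-!
The interpolated policy `π'` is itself non-expansive, as a convex combination of non-expansive
maps, and along the roll-out of `π` it differs from `π` by `β * ‖π̂ - π‖ ≤ β * ε`. Hence the
roll-out of `π` is a pseudo-orbit of the maps `π' (x (t + 1), ·)` with error `β * ε` per step, and
non-expansive maps never amplify the errors of earlier steps: these only add up.
-/

open AffineMap

theorem dist_lineMap_lineMap_le {𝕜 V P : Type*} [NormedField 𝕜] [SeminormedAddCommGroup V]
    [NormedSpace 𝕜 V] [PseudoMetricSpace P] [NormedAddTorsor V P] (p₁ p₂ q₁ q₂ : P) (c : 𝕜) :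
    dist (lineMap p₁ p₂ c) (lineMap q₁ q₂ c) ≤ ‖1 - c‖ * dist p₁ q₁ + ‖c‖ * dist p₂ q₂ :=
  calc
    dist (lineMap p₁ p₂ c) (lineMap q₁ q₂ c)
      = ‖(1 - c) • (p₁ -ᵥ q₁) + c • (p₂ -ᵥ q₂)‖ := by
        rw [dist_eq_norm_vsub V, lineMap_vsub_lineMap, lineMap_apply_module]
    _ ≤ ‖(1 - c) • (p₁ -ᵥ q₁)‖ + ‖c • (p₂ -ᵥ q₂)‖ := norm_add_le _ _
    _ = ‖1 - c‖ * dist p₁ q₁ + ‖c‖ * dist p₂ q₂ := by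
        simp only [norm_smul, ← dist_eq_norm_vsub]

theorem lipschitzWith_lineMap_of_mem_Icc {α V P : Type*} [PseudoMetricSpace α]
    [SeminormedAddCommGroup V] [NormedSpace ℝ V] [PseudoMetricSpace P] [NormedAddTorsor V P]
    {K : NNReal} {f g : α → P} {c : ℝ} (hf : LipschitzWith K f) (hg : LipschitzWith K g)
    (hc : c ∈ Set.Icc (0 : ℝ) 1) : LipschitzWith K fun a => lineMap (f a) (g a) c := by
  refine LipschitzWith.of_dist_le_mul fun a b => ?_
  calc
    dist (lineMap (f a) (g a) c) (lineMap (f b) (g b) c)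
      ≤ ‖1 - c‖ * dist (f a) (f b) + ‖c‖ * dist (g a) (g b) := dist_lineMap_lineMap_le ..
    _ ≤ ‖1 - c‖ * (K * dist a b) + ‖c‖ * (K * dist a b) := by
        gcongr
        exacts [hf.dist_le_mul a b, hg.dist_le_mul a b]
    _ = K * dist a b := by
        rw [Real.norm_of_nonneg hc.1, Real.norm_of_nonneg (sub_nonneg.2 hc.2)]
        ring

theorem dist_orbit_pseudoOrbit_le_s10 {M : Type*} [PseudoMetricSpace M] {f : ℕ → M → M}
    {u v : ℕ → M} {δ : ℕ → ℝ} {n : ℕ} (hf : ∀ i < n, LipschitzWith 1 (f i))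
    (hu : ∀ i < n, u (i + 1) = f i (u i)) (hv : ∀ i < n, dist (f i (v i)) (v (i + 1)) ≤ δ i) :
    dist (u n) (v n) ≤ dist (u 0) (v 0) + ∑ i ∈ Finset.range n, δ i := by
  induction n with
  | zero => simp
  | succ n ih =>
    have hn : n < n + 1 := n.lt_add_one
    have hprev : dist (u n) (v n) ≤ dist (u 0) (v 0) + ∑ i ∈ Finset.range n, δ i :=
      ih (fun i hi => hf i (hi.trans hn)) (fun i hi => hu i (hi.trans hn))
        fun i hi => hv i (hi.trans hn)
    have hnonexp : dist (f n (u n)) (f n (v n)) ≤ dist (u n) (v n) := by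
      simpa using (hf n hn).dist_le_mul (u n) (v n)
    calc
      dist (u (n + 1)) (v (n + 1)) = dist (f n (u n)) (v (n + 1)) := by rw [hu n hn]
      _ ≤ dist (f n (u n)) (f n (v n)) + dist (f n (v n)) (v (n + 1)) := dist_triangle _ _ _
      _ ≤ dist (u n) (v n) + δ n := add_le_add hnonexp (hv n hn)
      _ ≤ dist (u 0) (v 0) + ∑ i ∈ Finset.range (n + 1), δ i := by
          rw [Finset.sum_range_succ, ← add_assoc]
          gcongr

theorem nonexpansive_rollout_deviation_bound_general {X E : Type*} [SeminormedAddCommGroup E]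
    [NormedSpace ℝ E] {π πhat π' : X × E → E} {β ε : ℝ} {x : ℕ → X} {a a' : ℕ → E} {t : ℕ}
    (hπ : ∀ x, LipschitzWith 1 fun b => π (x, b))
    (hπhat : ∀ x, LipschitzWith 1 fun b => πhat (x, b)) (hβ : β ∈ Set.Icc (0 : ℝ) 1)
    (hπ' : ∀ x b, π' (x, b) = β • πhat (x, b) + (1 - β) • π (x, b)) (h0 : a' 0 = a 0)
    (ha : ∀ i, a (i + 1) = π (x (i + 1), a i)) (ha' : ∀ i, a' (i + 1) = π' (x (i + 1), a' i))
    (hclose : ∀ i < t, ‖πhat (x (i + 1), a i) - π (x (i + 1), a i)‖ ≤ ε) :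
    ‖a' t - a t‖ ≤ β * ε * t := by
  have hπ'_lineMap (x b) : π' (x, b) = lineMap (π (x, b)) (πhat (x, b)) β := by
    rw [hπ', lineMap_apply_module, add_comm]
  have hπ'_lipschitz (x) : LipschitzWith 1 fun b => π' (x, b) := by
    simpa only [hπ'_lineMap] using lipschitzWith_lineMap_of_mem_Icc (hπ x) (hπhat x) hβ
  have hstep (i) (hi : i < t) : dist (π' (x (i + 1), a i)) (a (i + 1)) ≤ β * ε := by
    rw [ha, hπ'_lineMap, dist_lineMap_left, Real.norm_of_nonneg hβ.1, dist_comm, dist_eq_norm]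
    exact mul_le_mul_of_nonneg_left (hclose i hi) hβ.1
  calc
    ‖a' t - a t‖ = dist (a' t) (a t) := (dist_eq_norm _ _).symm
    _ ≤ dist (a' 0) (a 0) + ∑ _i ∈ Finset.range t, β * ε :=
        dist_orbit_pseudoOrbit_le_s10 (fun i _ => hπ'_lipschitz (x (i + 1))) (fun i _ => ha' i) hstep
    _ = β * ε * t := by
        rw [h0, dist_self, zero_add, Finset.sum_const, Finset.card_range, nsmul_eq_mul, mul_comm]

/-- The key claim in the proof of Theorem 1 of the paper: for policies `π, π̂` that are
non-expansive in the action component, the roll-out of the interpolation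
`π' = β·π̂ + (1−β)·π` deviates from the roll-out of `π` by at most `β·ε·t` at step `t`,
where `ε` bounds `‖π̂ − π‖` along the roll-out of `π`. -/
theorem nonexpansive_rollout_deviation_bound {X : Type*} {k : ℕ}
    (π πhat : X × EuclideanSpace ℝ (Fin k) → EuclideanSpace ℝ (Fin k))
    (hπ : ∀ (x : X) (a a' : EuclideanSpace ℝ (Fin k)),
      ‖π (x, a) - π (x, a')‖ ≤ ‖a - a'‖)
    (hπhat : ∀ (x : X) (a a' : EuclideanSpace ℝ (Fin k)),
      ‖πhat (x, a) - πhat (x, a')‖ ≤ ‖a - a'‖)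
    (β : ℝ) (hβ : β ∈ Set.Ioo (0 : ℝ) 1)
    (π' : X × EuclideanSpace ℝ (Fin k) → EuclideanSpace ℝ (Fin k))
    (hπ' : ∀ (x : X) (a : EuclideanSpace ℝ (Fin k)),
      π' (x, a) = β • πhat (x, a) + (1 - β) • π (x, a))
    (T : ℕ) (x : ℕ → X) (a₀ : EuclideanSpace ℝ (Fin k))
    (a a' : ℕ → EuclideanSpace ℝ (Fin k))
    (ha0 : a 0 = a₀) (ha'0 : a' 0 = a₀)
    (ha : ∀ t : ℕ, a (t + 1) = π (x (t + 1), a t))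
    (ha' : ∀ t : ℕ, a' (t + 1) = π' (x (t + 1), a' t))
    (ε : ℝ) (hε : 0 ≤ ε)
    (hclose : ∀ t : ℕ, 1 ≤ t → t ≤ T →
      ‖πhat (x t, a (t - 1)) - π (x t, a (t - 1))‖ ≤ ε) :
    ∀ t : ℕ, t ≤ T → ‖a' t - a t‖ ≤ β * ε * t :=
  fun t ht => nonexpansive_rollout_deviation_bound_general
    (fun x => .mk_one <| by simpa only [dist_eq_norm] using hπ x)
    (fun x => .mk_one <| by simpa only [dist_eq_norm] using hπhat x)
    (Set.Ioo_subset_Icc_self hβ) hπ' (ha'0.trans ha0.symm) ha ha'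
    fun i hi => hclose (i + 1) i.succ_pos (hi.trans_le ht)
end

section
/- Let X be a set of contexts, λ > 0, and let f, f̂ : X × ℝ → ℝ. Fix a context sequence x₁,…,x_T, an expert action sequence a₁*,…,a_T* ∈ ℝ, and a common initial action a₀ = â₀. Define the roll-outs a_t = (f(x_t, a_{t−1}) + λ·a_{t−1})/(1+λ) and â_t = (f̂(x_t, â_{t−1}) + λ·â_{t−1})/(1+λ) for t = 1,…,T. Suppose the average prediction errors satisfy (1/T)·Σ_{t=1}^T |f(x_t, a_{t−1}) − a_t*| ≤ ω and (1/T)·Σ_{t=1}^T |f̂(x_t, â_{t−1}) − a_t*| ≤ ω. If the average gap between the expert actions and the roll-out of f satisfies (1/T)·Σ_{t=1}^T |a_t* − a_{t−1}| ≥ 3ω + η·(1+λ), then the roll-out of f̂ is non-smooth: (1/T)·Σ_{t=1}^T |â_t − â_{t−1}| ≥ η. -/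
/-!
The gap `‖e - a‖` between the expert action `e` and the current action `a` is at most
`‖q - e‖ + ‖q - b‖ + ‖b - a‖`, where `b` is the current action of the second roll-out and `q` its
prediction. Here `‖q - b‖` is `1 + λ` times the next increment of that roll-out. The distance
`d = ‖b - a‖` between the roll-outs satisfies `(1 + λ) d' ≤ ‖q - e‖ + ‖p - e‖ + λ d`, with `p` the
prediction of the first roll-out, so in the sum of the two bounds `d` appears as
`(1 + λ) (d - d')`, which telescopes over time.
-/

section SmoothAction

variable {E : Type*} [SeminormedAddCommGroup E] [NormedSpace ℝ E] {lam : ℝ}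

/-- The action chosen by the smooth policy class `Π_λ` from the prediction `p` and the previous
action `a`: the closed form of a minimizer of `a' ↦ ‖a' - p‖² + λ ‖a' - a‖²` for `λ ≥ 0`. -/
noncomputable def smoothAction (lam : ℝ) (p a : E) : E :=
  (1 + lam)⁻¹ • (p + lam • a)

theorem one_add_smul_smoothAction (hlam : 1 + lam ≠ 0) (p a : E) :
    (1 + lam) • smoothAction lam p a = p + lam • a :=
  smul_inv_smul₀ hlam _

theorem one_add_mul_norm_smoothAction_sub_self (hlam : 0 < 1 + lam) (p a : E) :
    (1 + lam) * ‖smoothAction lam p a - a‖ = ‖p - a‖ := by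
  rw [← norm_smul_of_nonneg hlam.le, smul_sub, one_add_smul_smoothAction hlam.ne']
  congr 1
  module

theorem one_add_mul_norm_smoothAction_sub_smoothAction_le (hlam : 0 ≤ lam) (p q a b : E) :
    (1 + lam) * ‖smoothAction lam q b - smoothAction lam p a‖ ≤ ‖q - p‖ + lam * ‖b - a‖ := by
  have hpos : 0 < 1 + lam := by positivity
  calc (1 + lam) * ‖smoothAction lam q b - smoothAction lam p a‖
      = ‖(q - p) + lam • (b - a)‖ := by
        rw [← norm_smul_of_nonneg hpos.le, smul_sub, one_add_smul_smoothAction hpos.ne',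
          one_add_smul_smoothAction hpos.ne']
        congr 1
        module
    _ ≤ ‖q - p‖ + lam * ‖b - a‖ := by
        rw [← norm_smul_of_nonneg hlam]
        exact norm_add_le _ _

theorem norm_sub_add_norm_smoothAction_sub_smoothAction_le (hlam : 0 ≤ lam) (e p q a b : E) :
    ‖e - a‖ + (1 + lam) * ‖smoothAction lam q b - smoothAction lam p a‖
      ≤ 2 * ‖q - e‖ + ‖p - e‖ + (1 + lam) * ‖smoothAction lam q b - b‖
        + (1 + lam) * ‖b - a‖ := by
  have gap_le : ‖e - a‖ ≤ ‖q - e‖ + ‖q - b‖ + ‖b - a‖ :=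
    calc ‖e - a‖ ≤ ‖e - b‖ + ‖b - a‖ := norm_sub_le_norm_sub_add_norm_sub _ _ _
      _ ≤ ‖q - e‖ + ‖q - b‖ + ‖b - a‖ := by
        rw [norm_sub_rev q e]
        gcongr
        exact norm_sub_le_norm_sub_add_norm_sub _ _ _
  have prediction_le : ‖q - p‖ ≤ ‖q - e‖ + ‖p - e‖ := by
    rw [norm_sub_rev p e]
    exact norm_sub_le_norm_sub_add_norm_sub _ _ _
  have drift_le := one_add_mul_norm_smoothAction_sub_smoothAction_le hlam p q a b
  have increment_eq := one_add_mul_norm_smoothAction_sub_self (by positivity : 0 < 1 + lam) q b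
  linarith

end SmoothAction

section Rollout

variable {X E : Type*} [SeminormedAddCommGroup E] [NormedSpace ℝ E] {lam : ℝ}
  {f fhat : X × E → E} {x : ℕ → X} {a ahat : ℕ → E}

/-- The trajectory `a` is the roll-out of the smooth policy with regressor `f` along the contexts
`x`. As in the paper, `a 0` is the free initial action and `x 0` is never read. -/
def IsSmoothRollout (lam : ℝ) (f : X × E → E) (x : ℕ → X) (a : ℕ → E) : Prop :=
  ∀ t, a (t + 1) = smoothAction lam (f (x (t + 1), a t)) (a t)

theorem IsSmoothRollout.sum_norm_sub_add_le (hlam : 0 ≤ lam) (ha : IsSmoothRollout lam f x a)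
    (hahat : IsSmoothRollout lam fhat x ahat) (astar : ℕ → E) (T : ℕ) :
    ∑ t ∈ Finset.Icc 1 T, ‖astar t - a (t - 1)‖ + (1 + lam) * ‖ahat T - a T‖
      ≤ 2 * ∑ t ∈ Finset.Icc 1 T, ‖fhat (x t, ahat (t - 1)) - astar t‖
        + ∑ t ∈ Finset.Icc 1 T, ‖f (x t, a (t - 1)) - astar t‖
        + (1 + lam) * ∑ t ∈ Finset.Icc 1 T, ‖ahat t - ahat (t - 1)‖
        + (1 + lam) * ‖ahat 0 - a 0‖ := by
  induction T with
  | zero => simp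
  | succ T ih =>
    have step := norm_sub_add_norm_smoothAction_sub_smoothAction_le hlam (astar (T + 1))
      (f (x (T + 1), a T)) (fhat (x (T + 1), ahat T)) (a T) (ahat T)
    rw [← ha T, ← hahat T] at step
    simp only [Finset.sum_Icc_succ_top (Nat.le_add_left 1 T), Nat.add_sub_cancel]
    linarith

theorem expert_feedback_non_smooth_general (hlam : 0 ≤ lam) (ha : IsSmoothRollout lam f x a)
    (hahat : IsSmoothRollout lam fhat x ahat) (h0 : a 0 = ahat 0) {T : ℕ} (hT : 1 ≤ T)
    {astar : ℕ → E} {ω ωhat η : ℝ}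
    (hferr : (1 / T : ℝ) * ∑ t ∈ Finset.Icc 1 T, ‖f (x t, a (t - 1)) - astar t‖ ≤ ω)
    (hfhaterr :
      (1 / T : ℝ) * ∑ t ∈ Finset.Icc 1 T, ‖fhat (x t, ahat (t - 1)) - astar t‖ ≤ ωhat)
    (hgap : ω + 2 * ωhat + η * (1 + lam)
      ≤ (1 / T : ℝ) * ∑ t ∈ Finset.Icc 1 T, ‖astar t - a (t - 1)‖) :
    η ≤ (1 / T : ℝ) * ∑ t ∈ Finset.Icc 1 T, ‖ahat t - ahat (t - 1)‖ := by
  have hT_pos : (0 : ℝ) < T := by exact_mod_cast hT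
  have hlam_pos : 0 < 1 + lam := by positivity
  rw [one_div_mul_eq_div, div_le_iff₀ hT_pos] at hferr hfhaterr
  rw [one_div_mul_eq_div, le_div_iff₀ hT_pos] at hgap ⊢
  have sum_le := ha.sum_norm_sub_add_le hlam hahat astar T
  rw [h0, sub_self, norm_zero, mul_zero, add_zero] at sum_le
  have final_nonneg : 0 ≤ (1 + lam) * ‖ahat T - a T‖ := by positivity
  refine le_of_mul_le_mul_left ?_ hlam_pos
  linarith

end Rollout

theorem isSmoothRollout_real_iff {X : Type*} {lam : ℝ} {f : X × ℝ → ℝ} {x : ℕ → X} {a : ℕ → ℝ} :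
    IsSmoothRollout lam f x a ↔
      ∀ t, a (t + 1) = (f (x (t + 1), a t) + lam * a t) / (1 + lam) := by
  simp only [IsSmoothRollout, smoothAction, smul_eq_mul, inv_mul_eq_div]

/-- Proposition 1 of the paper (smooth feedback is sometimes necessary): in the smooth
policy class `Π_λ` with 1-d actions, if the average gap between the expert actions and
the roll-out of the current policy is at least `3ω + η(1+λ)`, where `ω` bounds the
average supervised errors, then the policy trained on expert targets rolls out a
non-smooth trajectory: its average first-order difference is at least `η`. -/
theorem expert_feedback_non_smooth {X : Type*}
    (lam : ℝ) (hlam : 0 < lam)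
    (f fhat : X × ℝ → ℝ)
    (T : ℕ) (hT : 1 ≤ T) (x : ℕ → X) (astar : ℕ → ℝ)
    (a ahat : ℕ → ℝ) (h0 : a 0 = ahat 0)
    (haroll : ∀ t : ℕ, a (t + 1) = (f (x (t + 1), a t) + lam * a t) / (1 + lam))
    (hahatroll : ∀ t : ℕ,
      ahat (t + 1) = (fhat (x (t + 1), ahat t) + lam * ahat t) / (1 + lam))
    (ω η : ℝ)
    (hferr : (1 / T : ℝ) * ∑ t ∈ Finset.Icc 1 T, |f (x t, a (t - 1)) - astar t| ≤ ω)
    (hfhaterr :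
      (1 / T : ℝ) * ∑ t ∈ Finset.Icc 1 T, |fhat (x t, ahat (t - 1)) - astar t| ≤ ω)
    (hgap : (1 / T : ℝ) * ∑ t ∈ Finset.Icc 1 T, |astar t - a (t - 1)|
      ≥ 3 * ω + η * (1 + lam)) :
    (1 / T : ℝ) * ∑ t ∈ Finset.Icc 1 T, |ahat t - ahat (t - 1)| ≥ η :=
  expert_feedback_non_smooth_general hlam.le (isSmoothRollout_real_iff.2 haroll)
    (isSmoothRollout_real_iff.2 hahatroll) h0 hT hferr hfhaterr (le_trans (by linarith) hgap)
end

section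
/- Let X be a set of contexts, λ > 0, and let f, f̂ : X × ℝ → ℝ. Fix a context sequence x₁,…,x_T, an expert action sequence a₁*,…,a_T* ∈ ℝ, and a common initial action a₀ = â₀. Define a_t = (f(x_t, a_{t−1}) + λ·a_{t−1})/(1+λ) and â_t = (f̂(x_t, â_{t−1}) + λ·â_{t−1})/(1+λ) for t = 1,…,T. If (1/T)·Σ_{t=1}^T |f(x_t, a_{t−1}) − a_t*| ≤ ω and (1/T)·Σ_{t=1}^T |f̂(x_t, â_{t−1}) − a_t*| ≤ ω, then the two roll-outs stay close on average: (1/T)·Σ_{t=1}^T |a_t − â_t| ≤ 2ω. -/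
/-!
One smoothing step with parameter `λ` contracts the gap between two roll-outs by `λ / (1 + λ)` and
injects the disagreement of the regressors with weight `1 / (1 + λ)`. So the gaps `d t` and the
disagreements `e t` satisfy `d (t + 1) + λ (d (t + 1) - d t) ≤ e (t + 1)`; on summation the second
term telescopes, which bounds the total gap by the total disagreement plus `λ` times the initial
gap. Each disagreement is at most the sum of the two errors relative to the expert.
-/

open Finset

theorem sum_Icc_add_mul_le_of_one_add_mul_succ_le {R : Type*} [CommRing R] [PartialOrder R]
    [IsOrderedAddMonoid R] {c : R} {d e : ℕ → R}
    (h : ∀ t, (1 + c) * d (t + 1) ≤ e (t + 1) + c * d t) (n : ℕ) :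
    ∑ t ∈ Icc 1 n, d t + c * d n ≤ ∑ t ∈ Icc 1 n, e t + c * d 0 := by
  induction n with
  | zero => simp
  | succ n ih =>
    rw [sum_Icc_succ_top (by lia), sum_Icc_succ_top (by lia)]
    calc
      ∑ t ∈ Icc 1 n, d t + d (n + 1) + c * d (n + 1)
          = ∑ t ∈ Icc 1 n, d t + (1 + c) * d (n + 1) := by ring
      _ ≤ ∑ t ∈ Icc 1 n, d t + (e (n + 1) + c * d n) := by gcongr; exact h n
      _ = (∑ t ∈ Icc 1 n, d t + c * d n) + e (n + 1) := by ring
      _ ≤ (∑ t ∈ Icc 1 n, e t + c * d 0) + e (n + 1) := by gcongr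
      _ = ∑ t ∈ Icc 1 n, e t + e (n + 1) + c * d 0 := by ring

theorem sum_norm_sub_le_add_sum_norm_sub {ι E : Type*} [SeminormedAddCommGroup E]
    (s : Finset ι) (u v w : ι → E) :
    ∑ i ∈ s, ‖u i - v i‖ ≤ ∑ i ∈ s, ‖u i - w i‖ + ∑ i ∈ s, ‖v i - w i‖ := by
  rw [← sum_add_distrib]
  gcongr with i
  simpa only [dist_eq_norm] using dist_triangle_right (u i) (v i) (w i)

/-- The action of a policy in `Π_λ` when its regressor outputs `y` and the previous action is `p`.
Actions may be vectors, so the division by `1 + λ` is encoded as a scalar multiplication. -/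
noncomputable def smoothStep {E : Type*} [AddCommGroup E] [Module ℝ E] (lam : ℝ) (y p : E) : E :=
  (1 + lam)⁻¹ • (y + lam • p)

theorem smoothStep_eq_div (lam y p : ℝ) : smoothStep lam y p = (y + lam * p) / (1 + lam) := by
  rw [smoothStep, smul_eq_mul, smul_eq_mul, inv_mul_eq_div]

theorem smoothStep_sub_smoothStep {E : Type*} [AddCommGroup E] [Module ℝ E]
    (lam : ℝ) (y z p q : E) :
    smoothStep lam y p - smoothStep lam z q = smoothStep lam (y - z) (p - q) := by
  simp only [smoothStep]
  module

section Rollout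

variable {E : Type*} [SeminormedAddCommGroup E] [NormedSpace ℝ E] {lam : ℝ}

theorem one_add_mul_norm_smoothStep_le (hlam : 0 ≤ lam) (y p : E) :
    (1 + lam) * ‖smoothStep lam y p‖ ≤ ‖y‖ + lam * ‖p‖ := by
  have hpos : 0 < 1 + lam := by positivity
  calc
    (1 + lam) * ‖smoothStep lam y p‖ = ‖y + lam • p‖ := by
      rw [smoothStep, norm_smul_of_nonneg (inv_nonneg.2 hpos.le), mul_inv_cancel_left₀ hpos.ne']
    _ ≤ ‖y‖ + ‖lam • p‖ := norm_add_le _ _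
    _ = ‖y‖ + lam * ‖p‖ := by rw [norm_smul_of_nonneg hlam]

theorem sum_norm_sub_le_of_smoothStep (hlam : 0 ≤ lam) {u v a b : ℕ → E}
    (ha : ∀ t, a (t + 1) = smoothStep lam (u (t + 1)) (a t))
    (hb : ∀ t, b (t + 1) = smoothStep lam (v (t + 1)) (b t)) (n : ℕ) :
    ∑ t ∈ Icc 1 n, ‖a t - b t‖ ≤ ∑ t ∈ Icc 1 n, ‖u t - v t‖ + lam * ‖a 0 - b 0‖ := by
  have gap_succ_le (t : ℕ) :
      (1 + lam) * ‖a (t + 1) - b (t + 1)‖ ≤ ‖u (t + 1) - v (t + 1)‖ + lam * ‖a t - b t‖ := by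
    rw [ha, hb, smoothStep_sub_smoothStep]
    exact one_add_mul_norm_smoothStep_le hlam _ _
  calc
    ∑ t ∈ Icc 1 n, ‖a t - b t‖
        ≤ ∑ t ∈ Icc 1 n, ‖a t - b t‖ + lam * ‖a n - b n‖ :=
      le_add_of_nonneg_right (by positivity)
    _ ≤ ∑ t ∈ Icc 1 n, ‖u t - v t‖ + lam * ‖a 0 - b 0‖ :=
      sum_Icc_add_mul_le_of_one_add_mul_succ_le (d := fun t ↦ ‖a t - b t‖)
        (e := fun t ↦ ‖u t - v t‖) gap_succ_le n

theorem rollouts_stay_close_general {X : Type*} (hlam : 0 ≤ lam) (f fhat : X × E → E)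
    (T : ℕ) (hT : 1 ≤ T) (x : ℕ → X) (astar a ahat : ℕ → E)
    (haroll : ∀ t, a (t + 1) = smoothStep lam (f (x (t + 1), a t)) (a t))
    (hahatroll : ∀ t, ahat (t + 1) = smoothStep lam (fhat (x (t + 1), ahat t)) (ahat t))
    (ω ωhat : ℝ)
    (hferr : (1 / T : ℝ) * ∑ t ∈ Icc 1 T, ‖f (x t, a (t - 1)) - astar t‖ ≤ ω)
    (hfhaterr : (1 / T : ℝ) * ∑ t ∈ Icc 1 T, ‖fhat (x t, ahat (t - 1)) - astar t‖ ≤ ωhat) :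
    (1 / T : ℝ) * ∑ t ∈ Icc 1 T, ‖a t - ahat t‖ ≤ ω + ωhat + lam * ‖a 0 - ahat 0‖ / T := by
  have hT_pos : (0 : ℝ) < T := by exact_mod_cast hT
  have sum_gap_le := sum_norm_sub_le_of_smoothStep hlam (u := fun t ↦ f (x t, a (t - 1)))
    (v := fun t ↦ fhat (x t, ahat (t - 1))) haroll hahatroll T
  have sum_disagreement_le := sum_norm_sub_le_add_sum_norm_sub (Icc 1 T)
    (fun t ↦ f (x t, a (t - 1))) (fun t ↦ fhat (x t, ahat (t - 1))) astar
  rw [one_div_mul_eq_div, div_le_iff₀ hT_pos] at hferr hfhaterr ⊢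
  rw [add_mul, add_mul, div_mul_cancel₀ _ hT_pos.ne']
  linarith

end Rollout

/-- Intermediate step in the proof of Proposition 1 of the paper: in the smooth policy
class `Π_λ` with 1-d actions, if both regressors `f` and `f̂` have average error at most
`ω` relative to the expert actions along their respective roll-outs, then the two
roll-outs stay close on average: `(1/T)·Σ_t |a_t − â_t| ≤ 2ω`. -/
theorem rollouts_stay_close {X : Type*}
    (lam : ℝ) (hlam : 0 < lam)
    (f fhat : X × ℝ → ℝ)
    (T : ℕ) (hT : 1 ≤ T) (x : ℕ → X) (astar : ℕ → ℝ)
    (a ahat : ℕ → ℝ) (h0 : a 0 = ahat 0)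
    (haroll : ∀ t : ℕ, a (t + 1) = (f (x (t + 1), a t) + lam * a t) / (1 + lam))
    (hahatroll : ∀ t : ℕ,
      ahat (t + 1) = (fhat (x (t + 1), ahat t) + lam * ahat t) / (1 + lam))
    (ω : ℝ)
    (hferr : (1 / T : ℝ) * ∑ t ∈ Finset.Icc 1 T, |f (x t, a (t - 1)) - astar t| ≤ ω)
    (hfhaterr :
      (1 / T : ℝ) * ∑ t ∈ Finset.Icc 1 T, |fhat (x t, ahat (t - 1)) - astar t| ≤ ω) :
    (1 / T : ℝ) * ∑ t ∈ Finset.Icc 1 T, |a t - ahat t| ≤ 2 * ω := by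
  simpa [h0, two_mul] using rollouts_stay_close_general hlam.le f fhat T hT x astar a ahat
    (by simpa only [smoothStep_eq_div]) (by simpa only [smoothStep_eq_div]) ω ω hferr hfhaterr
end
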